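/- For all integers n ≥ 1 and m ≥ 2, γ̄_{n,m} < γ̄_{n,m-1}; that is, for each fixed n ≥ 1 the sequence m ↦ γ̄_{n,m} is strictly decreasing. -/

import Mathlib

/-- `γ̄_{n,m}`. -/
noncomputable def gammaBar (n m : ℕ) : ℝ :=
  (1 / (2 : ℝ) ^ ((n : ℤ) - m + 1)) *
    (((n : ℝ) + m) / ((n : ℝ) + m - 1) ^ (n + m)) *
    (Real.Gamma ((m : ℝ) / 2) * Real.Gamma (2 * (n : ℝ) + m) /
      Real.Gamma ((n : ℝ) + m / 2))

/-!
Put `N = n + m`, `x = m / 2` and `y = n + m / 2 + 1 / 2`. The quotient of consecutive terms is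
`4 (N + 1) (N - 1) ^ N / N ^ (N + 2)` times `Γ(x + 1/2) Γ(y + 1/2) / (Γ(x) Γ(y))`. Log-convexity of
`Γ` bounds the second factor by `√(x y)`, hence by `(x + y) / 2 = (2 N + 1) / 4`. What remains is
`(N + 1) (2 N + 1) (N - 1) ^ N < N ^ (N + 2)`, for which the three leading terms of the binomial
expansion of `N ^ N = ((N - 1) + 1) ^ N` suffice.
-/

open Real

theorem pow_add_mul_add_choose_two_mul_le_add_pow {R : Type*} [CommSemiring R] [PartialOrder R]
    [IsOrderedRing R] {a b : R} (ha : 0 ≤ a) (hb : 0 ≤ b) (n : ℕ) :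
    a ^ (n + 2) + (n + 2) * a ^ (n + 1) * b + (n + 2).choose 2 * a ^ n * b ^ 2 ≤
      (a + b) ^ (n + 2) := by
  rw [add_comm a b, add_pow, Finset.sum_range_succ', Finset.sum_range_succ',
    Finset.sum_range_succ']
  have tail_nonneg : 0 ≤ ∑ k ∈ Finset.range n,
      b ^ (k + 1 + 1 + 1) * a ^ (n + 2 - (k + 1 + 1 + 1)) * ((n + 2).choose (k + 1 + 1 + 1) : R) :=
    Finset.sum_nonneg fun k _ ↦ by positivity
  refine (le_add_of_nonneg_left tail_nonneg).trans_eq ?_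
  simp only [Nat.reduceSubDiff, zero_add, Nat.reduceAdd, add_tsub_cancel_right, pow_one,
    Nat.add_one_sub_one, Nat.choose_one_right, Nat.cast_add, Nat.cast_ofNat, pow_zero, tsub_zero,
    one_mul, Nat.choose_zero_right, Nat.cast_one, mul_one]
  ring

theorem five_mul_add_three_mul_pow_self_le {k : ℕ} (hk : k ≠ 0) :
    (5 * k + 3) * k ^ k ≤ 2 * (k + 1) ^ (k + 1) := by
  obtain ⟨j, rfl⟩ := Nat.exists_eq_add_one_of_ne_zero hk
  have choose_eq : 2 * (j + 2).choose 2 = (j + 2) * (j + 1) := by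
    rw [Nat.choose_two_right, Nat.mul_div_cancel' (Nat.even_mul_pred_self _).two_dvd]
    rfl
  calc (5 * (j + 1) + 3) * (j + 1) ^ (j + 1)
      = 2 * (j + 1) ^ (j + 2) + 2 * ((j + 2) * (j + 1) ^ (j + 1)) +
          (j + 2) * (j + 1) * (j + 1) ^ j := by ring
    _ = 2 * ((j + 1) ^ (j + 2) + (j + 2) * (j + 1) ^ (j + 1) * 1 +
          (j + 2).choose 2 * (j + 1) ^ j * 1 ^ 2) := by rw [← choose_eq]; ring
    _ ≤ 2 * (j + 1 + 1) ^ (j + 2) := by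
        gcongr
        exact pow_add_mul_add_choose_two_mul_le_add_pow (Nat.zero_le _) zero_le_one j

theorem add_two_mul_two_mul_add_three_mul_pow_lt_pow (k : ℕ) :
    (k + 2) * (2 * k + 3) * k ^ (k + 1) < (k + 1) ^ (k + 3) := by
  rcases eq_or_ne k 0 with rfl | hk
  · simp
  have poly_lt : 2 * ((k + 2) * (2 * k + 3) * k) < (k + 1) ^ 2 * (5 * k + 3) := by
    zify
    -- the difference is `(k + 1) * (k - 1) ^ 2 + 2`
    nlinarith [mul_nonneg (Int.natCast_nonneg (k + 1)) (sq_nonneg ((k : ℤ) - 1))]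
  have : 0 < k ^ k := Nat.pow_self_pos
  refine lt_of_mul_lt_mul_left ?_ (Nat.zero_le 2)
  calc 2 * ((k + 2) * (2 * k + 3) * k ^ (k + 1))
      = 2 * ((k + 2) * (2 * k + 3) * k) * k ^ k := by ring
    _ < (k + 1) ^ 2 * (5 * k + 3) * k ^ k := by gcongr
    _ = (k + 1) ^ 2 * ((5 * k + 3) * k ^ k) := by ring
    _ ≤ (k + 1) ^ 2 * (2 * (k + 1) ^ (k + 1)) :=
        Nat.mul_le_mul_left _ (five_mul_add_three_mul_pow_self_le hk)
    _ = 2 * (k + 1) ^ (k + 3) := by ring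

theorem add_one_mul_two_mul_add_one_mul_sub_one_pow_lt_pow {N : ℕ} (hN : 1 ≤ N) :
    ((N : ℝ) + 1) * (2 * N + 1) * ((N : ℝ) - 1) ^ N < (N : ℝ) ^ (N + 2) := by
  obtain ⟨k, rfl⟩ := Nat.exists_eq_add_of_le' hN
  have cast_lt : (((k + 2) * (2 * k + 3) * k ^ (k + 1) : ℕ) : ℝ) < ((k + 1) ^ (k + 3) : ℕ) :=
    Nat.cast_lt.2 (add_two_mul_two_mul_add_three_mul_pow_lt_pow k)
  push_cast at cast_lt ⊢
  convert cast_lt using 2 <;> ring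

theorem Gamma_add_le_rpow_mul_Gamma {x a : ℝ} (hx : 0 < x) (ha₀ : 0 ≤ a) (ha₁ : a ≤ 1) :
    Gamma (x + a) ≤ x ^ a * Gamma x := by
  rcases ha₀.eq_or_lt with rfl | ha₀
  · simp
  rcases ha₁.eq_or_lt with rfl | ha₁
  · simp [Gamma_add_one hx.ne']
  have hΓ : 0 < Gamma x := Gamma_pos_of_pos hx
  calc Gamma (x + a) = Gamma ((1 - a) * x + a * (x + 1)) := by ring_nf
    _ ≤ Gamma x ^ (1 - a) * Gamma (x + 1) ^ a :=
      Gamma_mul_add_mul_le_rpow_Gamma_mul_rpow_Gamma hx (by positivity) (sub_pos.2 ha₁) ha₀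
        (sub_add_cancel 1 a)
    _ = x ^ a * (Gamma x ^ (1 - a) * Gamma x ^ a) := by
      rw [Gamma_add_one hx.ne', mul_rpow hx.le hΓ.le]
      ring
    _ = x ^ a * Gamma x := by rw [← rpow_add hΓ, sub_add_cancel, rpow_one]

theorem Gamma_add_mul_Gamma_add_le {x y a b : ℝ} (hx : 0 < x) (hy : 0 < y) (ha : 0 ≤ a)
    (hb : 0 ≤ b) (hab : a + b = 1) :
    Gamma (x + a) * Gamma (y + b) ≤ (a * x + b * y) * (Gamma x * Gamma y) := by
  calc Gamma (x + a) * Gamma (y + b)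
      ≤ (x ^ a * Gamma x) * (y ^ b * Gamma y) := by
        gcongr
        · exact Gamma_add_le_rpow_mul_Gamma hx ha (by linarith)
        · exact Gamma_add_le_rpow_mul_Gamma hy hb (by linarith)
    _ = x ^ a * y ^ b * (Gamma x * Gamma y) := by ring
    _ ≤ (a * x + b * y) * (Gamma x * Gamma y) := by
        gcongr
        exact geom_mean_le_arith_mean2_weighted ha hb hx.le hy.le hab

theorem gammaBar_pos {n m : ℕ} (hm : 1 ≤ m) (hnm : 2 ≤ n + m) : 0 < gammaBar n m := by
  have : (0 : ℝ) < m := Nat.cast_pos.2 hm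
  have hN : (0 : ℝ) < n + m - 1 := by
    have : (2 : ℝ) ≤ n + m := by exact_mod_cast hnm
    linarith
  unfold gammaBar
  positivity

theorem gammaBar_succ {n m : ℕ} (hm : 1 ≤ m) (hnm : 2 ≤ n + m) :
    gammaBar n (m + 1) =
      4 * (((n : ℝ) + m + 1) * ((n : ℝ) + m - 1) ^ (n + m) / ((n : ℝ) + m) ^ (n + m + 2)) *
        (Gamma ((m : ℝ) / 2 + 1 / 2) * Gamma ((n : ℝ) + m / 2 + 1) /
          (Gamma ((m : ℝ) / 2) * Gamma ((n : ℝ) + m / 2 + 1 / 2))) * gammaBar n m := by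
  have : (0 : ℝ) < m := Nat.cast_pos.2 hm
  have hy : (0 : ℝ) < n + m / 2 := by positivity
  have hN : (n : ℝ) + m - 1 ≠ 0 := by
    have : (2 : ℝ) ≤ n + m := by exact_mod_cast hnm
    linarith
  have two_zpow_eq : (2 : ℝ) ^ ((n : ℤ) - m + 1) = 2 ^ ((n : ℤ) - (m + 1 : ℕ) + 1) * 2 := by
    rw [← zpow_add_one₀ two_ne_zero]
    push_cast
    ring_nf
  have Gamma_two_mul_add_eq :
      Gamma (2 * (n : ℝ) + (m + 1 : ℕ)) = (2 * n + m) * Gamma (2 * (n : ℝ) + m) := by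
    rw [← Gamma_add_one (by positivity), Nat.cast_add_one, add_assoc]
  unfold gammaBar
  rw [two_zpow_eq, Gamma_two_mul_add_eq, Gamma_add_one hy.ne', Nat.cast_add_one (R := ℝ),
    add_div (m : ℝ), ← add_assoc (n : ℝ) (m / 2), ← add_assoc (n : ℝ) m, add_sub_cancel_right]
  field_simp
  ring

theorem gammaBar_succ_lt {n m : ℕ} (hm : 1 ≤ m) (hnm : 2 ≤ n + m) :
    gammaBar n (m + 1) < gammaBar n m := by
  have : (0 : ℝ) < m := Nat.cast_pos.2 hm
  have hN : (2 : ℝ) ≤ n + m := by exact_mod_cast hnm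
  have Gamma_ratio_le : Gamma ((m : ℝ) / 2 + 1 / 2) * Gamma ((n : ℝ) + m / 2 + 1) /
      (Gamma ((m : ℝ) / 2) * Gamma ((n : ℝ) + m / 2 + 1 / 2)) ≤ (2 * ((n : ℝ) + m) + 1) / 4 := by
    rw [div_le_iff₀ (by positivity)]
    have Gamma_mul_le := Gamma_add_mul_Gamma_add_le (x := m / 2) (y := n + m / 2 + 1 / 2)
      (by positivity) (by positivity) one_half_pos.le one_half_pos.le (add_halves 1)
    rw [add_assoc _ (1 / 2 : ℝ), add_halves] at Gamma_mul_le
    exact Gamma_mul_le.trans_eq (by ring)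
  have pow_ratio_lt : ((n : ℝ) + m + 1) * (2 * ((n : ℝ) + m) + 1) * ((n : ℝ) + m - 1) ^ (n + m) /
      ((n : ℝ) + m) ^ (n + m + 2) < 1 := by
    rw [div_lt_one (by positivity)]
    exact_mod_cast add_one_mul_two_mul_add_one_mul_sub_one_pow_lt_pow (by omega : 1 ≤ n + m)
  rw [gammaBar_succ hm hnm]
  refine mul_lt_of_lt_one_left (gammaBar_pos hm hnm) ?_
  have : 0 ≤ (n : ℝ) + m - 1 := by linarith
  calc _ ≤ 4 * (((n : ℝ) + m + 1) * ((n : ℝ) + m - 1) ^ (n + m) / ((n : ℝ) + m) ^ (n + m + 2)) *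
        ((2 * ((n : ℝ) + m) + 1) / 4) := by gcongr
    _ = ((n : ℝ) + m + 1) * (2 * ((n : ℝ) + m) + 1) * ((n : ℝ) + m - 1) ^ (n + m) /
        ((n : ℝ) + m) ^ (n + m + 2) := by ring
    _ < 1 := pow_ratio_lt

theorem gammaBar_strict_decreasing_in_m (n m : ℕ) (hn : 1 ≤ n) (hm : 2 ≤ m) :
    gammaBar n m < gammaBar n (m - 1) := by
  obtain ⟨k, rfl⟩ := Nat.exists_eq_add_of_le' (one_le_two.trans hm)
  exact gammaBar_succ_lt (by omega) (by omega)
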